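/- Each of the three linear maps ξ_1, ξ_2, ξ_3 : ℝ² → V is a generic linear residual point of the root system of type G2; they lie in pairwise distinct W0-orbits (as generic linear residual points), and every generic linear residual point of G2 is W0-conjugate to exactly one of them. Moreover K^reg_{ξ1} = {(k1,k2) : (k1+2k2)(2k1+3k2) ≠ 0}, K^reg_{ξ2} = {(k1,k2) : (k1−2k2)(2k1−3k2) ≠ 0}, and K^reg_{ξ3} = {(k1,k2) : k1·k2 ≠ 0}. -/

import Mathlib

open Classical

noncomputable section

namespace G2Res

/-- shorthand for `√3` -/
def s3 : ℝ := Real.sqrt 3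

/-- evaluation of a linear functional (given by its coefficient vector) at a point -/
def eval (α ξ : Fin 2 → ℝ) : ℝ := ∑ t, α t * ξ t

/-- the root system of type `G2` in `ℝ²` (six short roots of squared length `1`, six
long roots of squared length `3`), realized so that `α1 = (−3/2, √3/2)` (long) and
`α2 = (1,0)` (short) are simple roots with `α1(α2∨) = −3` and `α2(α1∨) = −1` -/
def roots : Set (Fin 2 → ℝ) :=
  {![1, 0], ![-1, 0], ![1/2, s3/2], ![-(1/2), -(s3/2)], ![-(1/2), s3/2], ![1/2, -(s3/2)],
   ![-(3/2), s3/2], ![3/2, -(s3/2)], ![3/2, s3/2], ![-(3/2), -(s3/2)], ![0, s3], ![0, -s3]}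

/-- the short roots are the roots of squared length `1` -/
def isShort (α : Fin 2 → ℝ) : Prop := ∑ t, α t ^ 2 = 1

/-- the parameter function with value `k1` on the long roots and `k2` on the short
roots -/
def par (k1 k2 : ℝ) (α : Fin 2 → ℝ) : ℝ := if isShort α then k2 else k1

/-- `ξ` is a linear `(G2,(k1,k2))`-residual point -/
def IsResidual (k1 k2 : ℝ) (ξ : Fin 2 → ℝ) : Prop :=
  {α ∈ roots | eval α ξ = par k1 k2 α}.ncard = {α ∈ roots | eval α ξ = 0}.ncard + 2

/-- a linear map `ξ : ℝ² → ℝ²` is a generic linear residual point of type `G2` -/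
def IsGenericResidual (ξ : (ℝ × ℝ) →ₗ[ℝ] (Fin 2 → ℝ)) : Prop :=
  ∃ U : Set (ℝ × ℝ), IsOpen U ∧ Dense U ∧ ∀ k ∈ U, IsResidual k.1 k.2 (ξ k)

/-- the orthogonal reflection of `ℝ²` in the line perpendicular to `α` -/
def reflectBy (α : Fin 2 → ℝ) : (Fin 2 → ℝ) → (Fin 2 → ℝ) :=
  fun v => v - (2 * eval α v / eval α α) • α

/-- `f` belongs to the Weyl group `W0` of `G2`, i.e. `f` is a composition of
reflections in the roots -/
def InWeyl (f : (Fin 2 → ℝ) → (Fin 2 → ℝ)) : Prop :=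
  ∃ L : List (Fin 2 → ℝ), (∀ α ∈ L, α ∈ roots) ∧
    f = L.foldr (fun α g => reflectBy α ∘ g) id

/-- two generic linear residual points lie in the same `W0`-orbit (for the action of
`W0` by postcomposition) -/
def GenSameOrbit (ξ η : (ℝ × ℝ) →ₗ[ℝ] (Fin 2 → ℝ)) : Prop :=
  ∃ f, InWeyl f ∧ ∀ k, η k = f (ξ k)

/-- the simple roots:  `α1` long, `α2` short -/
def simple : Fin 2 → (Fin 2 → ℝ) := ![![-(3/2), s3/2], ![1, 0]]

/-- the vectors of values `(α1(ξ_i), α2(ξ_i))` of the three generic linear residual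
points `ξ_1, ξ_2, ξ_3` of `G2` -/
def vals : Fin 3 → (ℝ × ℝ) → (Fin 2 → ℝ) :=
  ![fun k => ![k.1, k.2],
    fun k => ![k.1, k.2 - k.1],
    fun k => ![k.1, (k.2 - k.1) / 2]]

/-- the regular parameter conditions defining `K^reg_{ξ_1}, K^reg_{ξ_2}, K^reg_{ξ_3}` -/
def regCond : Fin 3 → ℝ → ℝ → Prop :=
  ![fun k1 k2 => (k1 + 2*k2) * (2*k1 + 3*k2) ≠ 0,
    fun k1 k2 => (k1 - 2*k2) * (2*k1 - 3*k2) ≠ 0,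
    fun k1 k2 => k1 * k2 ≠ 0]

/-!
Fix a long root `β`, a short root `γ` and a point `v` with `β(v) = k1` and `γ(v) = k2`. Up to sign,
the roots `r` correspond bijectively to the roots `s_r β` of the length of `β`, and `s_r β` takes
the value `k1` at `v` iff `r(v) = 0` or `r ⟂ β`. If `2Z` roots vanish at `v`, then the value `k1` is
therefore taken by `Z` long roots, plus one more iff the root orthogonal to `β` does not vanish
at `v`. Short roots behave in the same way, so `v` is residual iff neither the root orthogonal to
`β` nor the one orthogonal to `γ` vanishes at `v`. As each length contributes at most `Z + 1`, a
residual point always admits such a pair `(β, γ)`. Hence the generic residual points are the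
solutions `η` of `β(η(k)) = k1`, `γ(η(k)) = k2`, and their orbits are those of `W0` on the pairs
`(β, γ)`, of which there are three, one for each angle.
-/

section GenericPoints

variable {𝕜 E F : Type*} [NontriviallyNormedField 𝕜] [TopologicalSpace E] [AddCommGroup E]
  [ContinuousAdd E] [Module 𝕜 E] [ContinuousSMul 𝕜 E] [TopologicalSpace F] [AddCommGroup F]
  [Module 𝕜 F]

lemma dense_setOf_apply_ne_zero {L : E →L[𝕜] F} (hL : L ≠ 0) : Dense {x | L x ≠ 0} := by
  have hcompl : {x | L x ≠ 0} = (L.ker : Set E)ᶜ := by ext; simp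
  rw [hcompl, ← interior_eq_empty_iff_dense_compl, ← Set.not_nonempty_iff_eq_empty]
  intro hne
  have htop := Submodule.eq_top_of_nonempty_interior' _ hne
  exact hL (ContinuousLinearMap.coe_injective (LinearMap.ker_eq_top.mp htop))

lemma exists_mem_forall_apply_eq_zero_imp [BaireSpace E] [T1Space F] {ι : Type*}
    [Countable ι] (L : ι → E →L[𝕜] F) {U : Set E} (hU : IsOpen U) (hne : U.Nonempty) :
    ∃ x ∈ U, ∀ i, L i x = 0 → L i = 0 := by
  have hdense : Dense (⋂ i : {i // L i ≠ 0}, {x | L i x ≠ 0}) :=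
    dense_iInter_of_isOpen (fun i => isOpen_compl_singleton.preimage (L i).continuous)
      (fun i => dense_setOf_apply_ne_zero i.2)
  obtain ⟨x, hxU, hx⟩ := hdense.inter_open_nonempty U hU hne
  exact ⟨x, hxU, fun i hi => by_contra fun hne => Set.mem_iInter.mp hx ⟨i, hne⟩ hi⟩

end GenericPoints

section Weyl

lemma eval_eq_dotProduct (α v : Fin 2 → ℝ) : eval α v = α ⬝ᵥ v := rfl

lemma eval_comm (α v : Fin 2 → ℝ) : eval α v = eval v α := dotProduct_comm α v

lemma eval_self_eq_zero {α : Fin 2 → ℝ} : eval α α = 0 ↔ α = 0 := dotProduct_self_eq_zero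

lemma eval_reflectBy_reflectBy (α u v : Fin 2 → ℝ) :
    eval (reflectBy α u) (reflectBy α v) = eval u v := by
  by_cases hα : eval α α = 0
  · simp [reflectBy, hα]
  · simp only [reflectBy, eval_eq_dotProduct, sub_dotProduct, dotProduct_sub, smul_dotProduct,
      dotProduct_smul, smul_eq_mul, dotProduct_comm u α] at hα ⊢
    field_simp
    ring

lemma inWeyl_id : InWeyl id := ⟨[], by simp, rfl⟩

lemma InWeyl.reflectBy_comp {f : (Fin 2 → ℝ) → (Fin 2 → ℝ)} (hf : InWeyl f) {α : Fin 2 → ℝ}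
    (hα : α ∈ roots) : InWeyl (reflectBy α ∘ f) := by
  obtain ⟨L, hL, rfl⟩ := hf
  exact ⟨α :: L, List.forall_mem_cons.mpr ⟨hα, hL⟩, rfl⟩

lemma InWeyl.eval_apply_apply {f : (Fin 2 → ℝ) → (Fin 2 → ℝ)} (hf : InWeyl f)
    (u v : Fin 2 → ℝ) : eval (f u) (f v) = eval u v := by
  obtain ⟨L, -, rfl⟩ := hf
  induction L with
  | nil => rfl
  | cons α L ih => rw [List.foldr_cons, Function.comp_apply, Function.comp_apply,
      eval_reflectBy_reflectBy, ih]

lemma GenSameOrbit.eval_self_eq {ξ η : (ℝ × ℝ) →ₗ[ℝ] (Fin 2 → ℝ)} (h : GenSameOrbit ξ η)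
    (k : ℝ × ℝ) : eval (η k) (η k) = eval (ξ k) (ξ k) := by
  obtain ⟨f, hf, hη⟩ := h
  rw [hη, hf.eval_apply_apply]

end Weyl

section Coordinates

/-- The functional with integer coordinates `m` in the basis of simple roots; working in these
coordinates makes statements about the finitely many roots decidable. -/
def ofCoords (m : ℤ × ℤ) : Fin 2 → ℝ := (m.1 : ℝ) • simple 0 + (m.2 : ℝ) • simple 1

/-- The squared length of `ofCoords m`, as an integral quadratic form. -/
def sqLength (m : ℤ × ℤ) : ℤ := 3 * m.1 ^ 2 - 3 * m.1 * m.2 + m.2 ^ 2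

/-- The Cartan integer `m(r∨)`; the integer division is exact when `m` and `r` are roots. -/
def cartanInt (m r : ℤ × ℤ) : ℤ := QuadraticMap.polar sqLength m r / sqLength r

/-- The reflection `s_r m` in coordinates, for a root `r`. -/
def reflectCoords (r m : ℤ × ℤ) : ℤ × ℤ := m - cartanInt m r • r

/-- The coordinates of the positive roots. -/
def posCoords : Finset (ℤ × ℤ) := {(1, 0), (1, 3), (2, 3), (0, 1), (1, 1), (1, 2)}

/-- The coordinates of the roots. -/
def rootCoords : Finset (ℤ × ℤ) := posCoords ∪ posCoords.image Neg.neg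

/-- The coordinates of the roots of squared length `q`: the long roots for `q = 3`, the short roots
for `q = 1`. -/
def rootCoordsOfSqLength (q : ℤ) : Finset (ℤ × ℤ) := rootCoords.filter fun m => sqLength m = q

/-- The positive roots orthogonal to `m`; there is exactly one when `m` is a root. -/
def orthogonalCoords (m : ℤ × ℤ) : Finset (ℤ × ℤ) := posCoords.filter fun r => cartanInt m r = 0

lemma mem_rootCoords_of_mem {q : ℤ} {m : ℤ × ℤ} (hm : m ∈ rootCoordsOfSqLength q) :
    m ∈ rootCoords :=
  (Finset.mem_filter.mp hm).1

lemma mem_rootCoords_of_mem_posCoords {r : ℤ × ℤ} (hr : r ∈ posCoords) : r ∈ rootCoords :=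
  Finset.mem_union_left _ hr

lemma sqLength_eq_three_or_one : ∀ r ∈ rootCoords, sqLength r = 3 ∨ sqLength r = 1 := by decide

lemma sqLength_ne_zero {r : ℤ × ℤ} (hr : r ∈ rootCoords) : sqLength r ≠ 0 := by
  rcases sqLength_eq_three_or_one r hr with h | h <;> simp [h]

lemma cartanInt_mul_sqLength :
    ∀ m ∈ rootCoords, ∀ r ∈ rootCoords,
      cartanInt m r * sqLength r = QuadraticMap.polar sqLength m r := by
  decide

lemma exists_orthogonalCoords_eq :
    ∀ m ∈ rootCoords, ∃ p ∈ posCoords, orthogonalCoords m = {p} := by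
  decide

lemma image_reflectCoords_posCoords :
    ∀ m ∈ rootCoords,
      posCoords.image (reflectCoords · m) = rootCoordsOfSqLength (sqLength m) := by
  decide

lemma reflectCoords_mem_rootCoords :
    ∀ r ∈ rootCoords, ∀ m ∈ rootCoords, reflectCoords r m ∈ rootCoords := by
  decide

lemma injOn_reflectCoords_posCoords :
    ∀ m ∈ rootCoords, ∀ r ∈ posCoords, ∀ s ∈ posCoords,
      reflectCoords r m = reflectCoords s m → r = s := by
  decide

lemma s3_mul_self : s3 * s3 = 3 := Real.mul_self_sqrt (by norm_num)

lemma ofCoords_eq (m : ℤ × ℤ) : ofCoords m = ![-(3 / 2) * (m.1 : ℝ) + m.2, s3 / 2 * m.1] := by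
  ext t
  fin_cases t <;> simp [ofCoords, simple] <;> ring

lemma eval_ofCoords (m : ℤ × ℤ) (v : Fin 2 → ℝ) :
    eval (ofCoords m) v = m.1 * eval (simple 0) v + m.2 * eval (simple 1) v := by
  simp [ofCoords, eval_eq_dotProduct]

lemma eval_ofCoords_neg (m : ℤ × ℤ) (v : Fin 2 → ℝ) :
    eval (ofCoords (-m)) v = -eval (ofCoords m) v := by
  simp only [eval_ofCoords, Prod.fst_neg, Prod.snd_neg, Int.cast_neg]
  ring

lemma eval_ofCoords_reflectCoords (r m : ℤ × ℤ) (v : Fin 2 → ℝ) :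
    eval (ofCoords (reflectCoords r m)) v =
      eval (ofCoords m) v - cartanInt m r * eval (ofCoords r) v := by
  simp only [eval_ofCoords, reflectCoords, Prod.fst_sub, Prod.snd_sub, Prod.smul_fst, Prod.smul_snd,
    smul_eq_mul, Int.cast_sub, Int.cast_mul]
  ring

lemma two_mul_eval_ofCoords_ofCoords (m n : ℤ × ℤ) :
    2 * eval (ofCoords m) (ofCoords n) = QuadraticMap.polar sqLength m n := by
  simp only [eval, Fin.sum_univ_two, ofCoords_eq, Matrix.cons_val_zero, Matrix.cons_val_one,
    Matrix.cons_val_fin_one, QuadraticMap.polar, sqLength, Prod.fst_add, Prod.snd_add]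
  push_cast
  linear_combination (m.1 * n.1 / 2 : ℝ) * s3_mul_self

lemma eval_ofCoords_self (m : ℤ × ℤ) : eval (ofCoords m) (ofCoords m) = sqLength m := by
  have h := two_mul_eval_ofCoords_ofCoords m m
  simp only [QuadraticMap.polar, sqLength, Prod.fst_add, Prod.snd_add] at h ⊢
  push_cast at h ⊢
  linarith

lemma three_mul_eval_self (v : Fin 2 → ℝ) :
    3 * eval v v = 4 * (eval (simple 0) v ^ 2 + 3 * eval (simple 0) v * eval (simple 1) v +
      3 * eval (simple 1) v ^ 2) := by
  simp only [eval, Fin.sum_univ_two, simple, Matrix.cons_val_zero, Matrix.cons_val_one,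
    Matrix.cons_val_fin_one]
  linear_combination (-(v 1) ^ 2) * s3_mul_self

lemma ofCoords_injective : Function.Injective ofCoords := by
  have hs3 : s3 ≠ 0 := fun h => by simpa [h] using s3_mul_self
  intro m n h
  rw [ofCoords_eq, ofCoords_eq] at h
  have hfst : (m.1 : ℝ) = n.1 := mul_left_cancel₀ (div_ne_zero hs3 two_ne_zero) (congrFun h 1)
  have hsnd : -(3 / 2) * (m.1 : ℝ) + m.2 = -(3 / 2) * n.1 + n.2 := congrFun h 0
  rw [hfst, add_right_inj] at hsnd
  exact Prod.ext (by exact_mod_cast hfst) (by exact_mod_cast hsnd)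

lemma ofCoords_ne_zero {r : ℤ × ℤ} (hr : r ∈ rootCoords) : ofCoords r ≠ 0 := by
  rw [Ne, ← eval_self_eq_zero, eval_ofCoords_self]
  exact_mod_cast sqLength_ne_zero hr

lemma isShort_ofCoords (m : ℤ × ℤ) : isShort (ofCoords m) ↔ sqLength m = 1 := by
  have h : ∑ t, ofCoords m t ^ 2 = sqLength m := by
    simp only [← eval_ofCoords_self, eval, sq]
  rw [isShort, h]
  norm_cast

lemma par_ofCoords (k1 k2 : ℝ) (m : ℤ × ℤ) :
    par k1 k2 (ofCoords m) = if sqLength m = 1 then k2 else k1 := by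
  simp only [par, isShort_ofCoords]

lemma roots_eq_image_ofCoords : roots = ofCoords '' rootCoords := by
  have hlist : rootCoords = {(0, 1), (0, -1), (1, 2), (-1, -2), (1, 1), (-1, -1), (1, 0), (-1, 0),
      (1, 3), (-1, -3), (2, 3), (-2, -3)} := by decide
  simp only [hlist, Finset.coe_insert, Finset.coe_singleton, Set.image_insert_eq,
    Set.image_singleton, ofCoords_eq, roots]
  norm_num

lemma ofCoords_mem_roots {m : ℤ × ℤ} (hm : m ∈ rootCoords) : ofCoords m ∈ roots :=
  roots_eq_image_ofCoords ▸ Set.mem_image_of_mem _ hm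

lemma reflectBy_ofCoords {r m : ℤ × ℤ} (hr : r ∈ rootCoords) (hm : m ∈ rootCoords) :
    reflectBy (ofCoords r) (ofCoords m) = ofCoords (reflectCoords r m) := by
  have hr0 : (sqLength r : ℝ) ≠ 0 := by exact_mod_cast sqLength_ne_zero hr
  have hcoeff : 2 * eval (ofCoords r) (ofCoords m) / eval (ofCoords r) (ofCoords r) =
      cartanInt m r := by
    rw [eval_comm, two_mul_eval_ofCoords_ofCoords, eval_ofCoords_self,
      ← cartanInt_mul_sqLength m hm r hr, Int.cast_mul, mul_div_cancel_right₀ _ hr0]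
  rw [reflectBy, hcoeff]
  ext t
  simp only [ofCoords, reflectCoords, Pi.sub_apply, Pi.add_apply, Pi.smul_apply, Prod.fst_sub,
    Prod.snd_sub, Prod.smul_fst, Prod.smul_snd, smul_eq_mul, Int.cast_sub, Int.cast_mul]
  ring

end Coordinates

section Counting

variable {k1 k2 : ℝ} {v : Fin 2 → ℝ}

/-- No root orthogonal to `m` vanishes at `v`. -/
def OrthogonalNeZero (m : ℤ × ℤ) (v : Fin 2 → ℝ) : Prop :=
  ∀ r ∈ orthogonalCoords m, eval (ofCoords r) v ≠ 0

/-- The number of root hyperplanes through `v`. -/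
def hyperplaneCount (v : Fin 2 → ℝ) : ℕ := (posCoords.filter fun r => eval (ofCoords r) v = 0).card

/-- The number of roots of squared length `q` taking the value `κ` at `v`. -/
def valueCount (q : ℤ) (κ : ℝ) (v : Fin 2 → ℝ) : ℕ :=
  ((rootCoordsOfSqLength q).filter fun m => eval (ofCoords m) v = κ).card

lemma ncard_roots_filter (p : (Fin 2 → ℝ) → Prop) :
    {α ∈ roots | p α}.ncard = (rootCoords.filter fun m => p (ofCoords m)).card := by
  have himage : {α ∈ roots | p α} =
      ofCoords '' (rootCoords.filter fun m => p (ofCoords m) : Finset (ℤ × ℤ)) := by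
    ext α
    simp only [roots_eq_image_ofCoords, Finset.coe_filter]
    aesop
  rw [himage, Set.ncard_image_of_injective _ ofCoords_injective, Set.ncard_coe_finset]

lemma ncard_roots_eval_eq_zero (v : Fin 2 → ℝ) :
    {α ∈ roots | eval α v = 0}.ncard = 2 * hyperplaneCount v := by
  have hdisj : Disjoint posCoords (posCoords.image Neg.neg) := by decide
  rw [ncard_roots_filter, rootCoords, Finset.filter_union,
    Finset.card_union_of_disjoint (Finset.disjoint_filter_filter hdisj), Finset.filter_image,
    Finset.card_image_of_injective _ neg_injective]
  simp only [eval_ofCoords_neg, neg_eq_zero]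
  exact (two_mul _).symm

lemma ncard_roots_eval_eq_par (k1 k2 : ℝ) (v : Fin 2 → ℝ) :
    {α ∈ roots | eval α v = par k1 k2 α}.ncard = valueCount 3 k1 v + valueCount 1 k2 v := by
  rw [ncard_roots_filter, ← Finset.card_filter_add_card_filter_not (fun m => sqLength m = 3)]
  simp only [valueCount, rootCoordsOfSqLength, Finset.filter_filter, par_ofCoords]
  congr 2 <;> refine Finset.filter_congr fun m hm => ?_ <;>
    rcases sqLength_eq_three_or_one m hm with h | h <;> simp [h]

lemma isResidual_iff_valueCount : IsResidual k1 k2 v ↔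
    valueCount 3 k1 v + valueCount 1 k2 v = 2 * hyperplaneCount v + 2 := by
  rw [IsResidual, ncard_roots_eval_eq_par, ncard_roots_eval_eq_zero]

lemma valueCount_eq {m : ℤ × ℤ} {q : ℤ} {κ : ℝ} (hm : m ∈ rootCoordsOfSqLength q)
    (hκ : eval (ofCoords m) v = κ) :
    valueCount q κ v = hyperplaneCount v + if OrthogonalNeZero m v then 1 else 0 := by
  obtain ⟨hmroot, rfl⟩ := Finset.mem_filter.mp hm
  obtain ⟨p, hppos, hp⟩ := exists_orthogonalCoords_eq m hmroot
  have hcartan : ∀ r ∈ posCoords, cartanInt m r = 0 ↔ r = p := fun r hr => by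
    simpa [orthogonalCoords, hr] using Finset.ext_iff.mp hp r
  have hreflect : valueCount (sqLength m) κ v =
      (posCoords.filter fun r => r = p ∨ eval (ofCoords r) v = 0).card := by
    rw [valueCount, ← image_reflectCoords_posCoords m hmroot, Finset.filter_image,
      Finset.card_image_of_injOn]
    · congr 1
      refine Finset.filter_congr fun r hr => ?_
      rw [eval_ofCoords_reflectCoords, hκ, sub_eq_self, mul_eq_zero, Int.cast_eq_zero,
        hcartan r hr]
    · exact fun r hr s hs => injOn_reflectCoords_posCoords m hmroot r (Finset.filter_subset _ _ hr)
        s (Finset.filter_subset _ _ hs)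
  rw [hreflect, Finset.filter_or, Finset.filter_eq', if_pos hppos, ← Finset.insert_eq,
    Finset.card_insert_eq_ite, hyperplaneCount]
  simp only [OrthogonalNeZero, hp, Finset.mem_singleton, forall_eq, Finset.mem_filter, hppos,
    true_and]
  split_ifs <;> first | rfl | contradiction

lemma exists_eval_eq_of_valueCount_ne_zero {q : ℤ} {κ : ℝ} (h : valueCount q κ v ≠ 0) :
    ∃ m ∈ rootCoordsOfSqLength q, eval (ofCoords m) v = κ := by
  obtain ⟨m, hm⟩ := Finset.card_ne_zero.mp h
  exact ⟨m, Finset.mem_filter.mp hm⟩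

lemma valueCount_le (q : ℤ) (κ : ℝ) (v : Fin 2 → ℝ) :
    valueCount q κ v ≤ hyperplaneCount v + 1 := by
  by_cases h : valueCount q κ v = 0
  · simp [h]
  · obtain ⟨m, hm, hκ⟩ := exists_eval_eq_of_valueCount_ne_zero h
    rw [valueCount_eq hm hκ]
    split_ifs <;> simp

theorem isResidual_iff_orthogonalNeZero {m n : ℤ × ℤ} (hm : m ∈ rootCoordsOfSqLength 3)
    (hn : n ∈ rootCoordsOfSqLength 1) (hk1 : eval (ofCoords m) v = k1)
    (hk2 : eval (ofCoords n) v = k2) :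
    IsResidual k1 k2 v ↔ OrthogonalNeZero m v ∧ OrthogonalNeZero n v := by
  rw [isResidual_iff_valueCount, valueCount_eq hm hk1, valueCount_eq hn hk2]
  split_ifs <;> simp_all <;> omega

lemma IsResidual.exists_eval_eq (h : IsResidual k1 k2 v) :
    (∃ m ∈ rootCoordsOfSqLength 3, eval (ofCoords m) v = k1) ∧
      ∃ n ∈ rootCoordsOfSqLength 1, eval (ofCoords n) v = k2 := by
  rw [isResidual_iff_valueCount] at h
  have hlong := valueCount_le 3 k1 v
  have hshort := valueCount_le 1 k2 v
  exact ⟨exists_eval_eq_of_valueCount_ne_zero (by omega),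
    exists_eval_eq_of_valueCount_ne_zero (by omega)⟩

end Counting

section GenericResidual

variable {β γ : Fin 2 → ℝ} {ξ η : (ℝ × ℝ) →ₗ[ℝ] (Fin 2 → ℝ)}

/-- `η` is inverse to the map `v ↦ (β(v), γ(v))`. -/
def HasValues (β γ : Fin 2 → ℝ) (η : (ℝ × ℝ) →ₗ[ℝ] (Fin 2 → ℝ)) : Prop :=
  ∀ k, eval β (η k) = k.1 ∧ eval γ (η k) = k.2

/-- The linear form `k ↦ α(η(k))`. -/
def evalForm (α : Fin 2 → ℝ) (η : (ℝ × ℝ) →ₗ[ℝ] (Fin 2 → ℝ)) : (ℝ × ℝ) →L[ℝ] ℝ :=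
  (dotProductEquiv ℝ (Fin 2) α ∘ₗ η).toContinuousLinearMap

lemma evalForm_apply (α : Fin 2 → ℝ) (k : ℝ × ℝ) : evalForm α η k = eval α (η k) := rfl

lemma HasValues.surjective (h : HasValues β γ η) : Function.Surjective η := by
  have hinj : Function.Injective η := fun k l hkl => Prod.ext
    (by rw [← (h k).1, ← (h l).1, hkl]) (by rw [← (h k).2, ← (h l).2, hkl])
  exact (LinearMap.injective_iff_surjective_of_finrank_eq_finrank (by simp)).mp hinj

lemma HasValues.evalForm_ne_zero (h : HasValues β γ η) {α : Fin 2 → ℝ} (hα : α ≠ 0) :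
    evalForm α η ≠ 0 := by
  obtain ⟨k, hk⟩ := h.surjective α
  refine fun h0 => hα (eval_self_eq_zero.mp ?_)
  rw [← congrArg (eval α) hk, ← evalForm_apply, h0, zero_apply]

lemma HasValues.genSameOrbit {f : (Fin 2 → ℝ) → (Fin 2 → ℝ)} (hf : InWeyl f)
    (hξ : HasValues β γ ξ) (hη : HasValues (f β) (f γ) η) : GenSameOrbit ξ η := by
  refine ⟨f, hf, fun k => ?_⟩
  obtain ⟨l, hl⟩ := hη.surjective (f (ξ k))
  have hlk : l = k := Prod.ext
    (by rw [← (hη l).1, hl, hf.eval_apply_apply, (hξ k).1])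
    (by rw [← (hη l).2, hl, hf.eval_apply_apply, (hξ k).2])
  rw [← hl, hlk]

lemma HasValues.isGenericResidual {m n : ℤ × ℤ} (hm : m ∈ rootCoordsOfSqLength 3)
    (hn : n ∈ rootCoordsOfSqLength 1) (h : HasValues (ofCoords m) (ofCoords n) η) :
    IsGenericResidual η := by
  obtain ⟨p, hppos, hp⟩ := exists_orthogonalCoords_eq m (mem_rootCoords_of_mem hm)
  obtain ⟨q, hqpos, hq⟩ := exists_orthogonalCoords_eq n (mem_rootCoords_of_mem hn)
  have hopen : ∀ r, IsOpen {k | evalForm (ofCoords r) η k ≠ 0} := fun r =>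
    isOpen_compl_singleton.preimage (evalForm (ofCoords r) η).continuous
  have hdense : ∀ r ∈ posCoords, Dense {k | evalForm (ofCoords r) η k ≠ 0} := fun r hr =>
    dense_setOf_apply_ne_zero (h.evalForm_ne_zero
      (ofCoords_ne_zero (mem_rootCoords_of_mem_posCoords hr)))
  refine ⟨_, (hopen p).inter (hopen q), (hdense p hppos).inter_of_isOpen_left (hdense q hqpos)
    (hopen p), fun k hk => ?_⟩
  rw [isResidual_iff_orthogonalNeZero hm hn (h k).1 (h k).2]
  simpa [OrthogonalNeZero, hp, hq, evalForm_apply] using hk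

lemma IsGenericResidual.exists_hasValues (h : IsGenericResidual η) :
    ∃ m ∈ rootCoordsOfSqLength 3, ∃ n ∈ rootCoordsOfSqLength 1,
      HasValues (ofCoords m) (ofCoords n) η := by
  obtain ⟨U, hU, hdense, hres⟩ := h
  obtain ⟨k, hkU, hk⟩ := exists_mem_forall_apply_eq_zero_imp
    (Sum.elim (fun m => evalForm (ofCoords m) η - .fst ℝ ℝ ℝ)
      (fun n => evalForm (ofCoords n) η - .snd ℝ ℝ ℝ)) hU hdense.nonempty
  obtain ⟨⟨m, hm, hk1⟩, n, hn, hk2⟩ := (hres k hkU).exists_eval_eq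
  have hfst := hk (.inl m) (sub_eq_zero.mpr hk1)
  have hsnd := hk (.inr n) (sub_eq_zero.mpr hk2)
  exact ⟨m, hm, n, hn, fun l => ⟨sub_eq_zero.mp (congrArg (· l) hfst),
    sub_eq_zero.mp (congrArg (· l) hsnd)⟩⟩

end GenericResidual

section Representatives

variable {i j : Fin 3} {ξ η : (ℝ × ℝ) →ₗ[ℝ] (Fin 2 → ℝ)}

/-- The short roots `α2`, `α1 + α2` and `α1 + 2 α2`, which form the angles `5π/6`, `π/6` and `π/2`
with the long simple root; the point `ξ_i` takes the value `k2` on the `i`-th of them. -/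
def shortRep : Fin 3 → ℤ × ℤ := ![(0, 1), (1, 1), (1, 2)]

lemma shortRep_mem : ∀ i, shortRep i ∈ rootCoordsOfSqLength 1 := by decide

lemma exists_reflectCoords_eq :
    ∀ m ∈ rootCoordsOfSqLength 3, ∀ n ∈ rootCoordsOfSqLength 1, ∃ r ∈ posCoords, ∃ i,
      reflectCoords r (1, 0) = m ∧ (reflectCoords r (shortRep i) = n ∨
        reflectCoords r (reflectCoords (1, 2) (shortRep i)) = n) := by
  decide

lemma exists_inWeyl_ofCoords_eq {m n : ℤ × ℤ} (hm : m ∈ rootCoordsOfSqLength 3)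
    (hn : n ∈ rootCoordsOfSqLength 1) :
    ∃ i f, InWeyl f ∧ f (ofCoords (1, 0)) = ofCoords m ∧
      f (ofCoords (shortRep i)) = ofCoords n := by
  have hα1 : (1, 0) ∈ rootCoords := by decide
  have hα12 : (1, 2) ∈ rootCoords := by decide
  have hfix : reflectCoords (1, 2) (1, 0) = (1, 0) := by decide
  obtain ⟨r, hrpos, i, hrm, hrn⟩ := exists_reflectCoords_eq m hm n hn
  have hr := mem_rootCoords_of_mem_posCoords hrpos
  have hi := mem_rootCoords_of_mem (shortRep_mem i)
  rcases hrn with hrn | hrn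
  · refine ⟨i, _, inWeyl_id.reflectBy_comp (ofCoords_mem_roots hr), ?_, ?_⟩
    · rw [Function.comp_id, reflectBy_ofCoords hr hα1, hrm]
    · rw [Function.comp_id, reflectBy_ofCoords hr hi, hrn]
  · refine ⟨i, _, (inWeyl_id.reflectBy_comp (ofCoords_mem_roots hα12)).reflectBy_comp
      (ofCoords_mem_roots hr), ?_, ?_⟩
    · rw [Function.comp_id, Function.comp_apply, reflectBy_ofCoords hα12 hα1, hfix,
        reflectBy_ofCoords hr hα1, hrm]
    · rw [Function.comp_id, Function.comp_apply, reflectBy_ofCoords hα12 hi,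
        reflectBy_ofCoords hr (reflectCoords_mem_rootCoords _ hα12 _ hi), hrn]

lemma hasValues_of_eval_simple (h : ∀ k j, eval (simple j) (ξ k) = vals i k j) :
    HasValues (ofCoords (1, 0)) (ofCoords (shortRep i)) ξ := by
  intro k
  fin_cases i <;> simp [eval_ofCoords, h, vals, shortRep]
  ring

lemma three_mul_eval_self_of_eval_simple {v : Fin 2 → ℝ}
    (h : ∀ j, eval (simple j) v = vals i (1, 2) j) :
    3 * eval v v = (![76, 28, 13] i : ℕ) := by
  rw [three_mul_eval_self, h, h]
  fin_cases i <;> simp [vals] <;> norm_num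

lemma eq_of_eval_self_eq (hξ : ∀ k l, eval (simple l) (ξ k) = vals i k l)
    (hη : ∀ k l, eval (simple l) (η k) = vals j k l)
    (h : ∀ k, eval (ξ k) (ξ k) = eval (η k) (η k)) : i = j := by
  -- at `k = (1, 2)` the three points have different lengths, and `W0` preserves lengths
  have hinj : Function.Injective ![76, 28, 13] := by decide
  refine hinj (Nat.cast_injective (R := ℝ) ?_)
  rw [← three_mul_eval_self_of_eval_simple (hξ (1, 2)),
    ← three_mul_eval_self_of_eval_simple (hη (1, 2)), h]

lemma orthogonalCoords_long : orthogonalCoords (1, 0) = {(1, 2)} := by decide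

lemma orthogonalCoords_shortRep :
    ∀ i, orthogonalCoords (shortRep i) = {![(2, 3), (1, 3), (1, 0)] i} := by
  decide

lemma orthogonalNeZero_iff_regCond {k1 k2 : ℝ} {v : Fin 2 → ℝ}
    (hk1 : eval (ofCoords (1, 0)) v = k1) (hk2 : eval (ofCoords (shortRep i)) v = k2) :
    OrthogonalNeZero (1, 0) v ∧ OrthogonalNeZero (shortRep i) v ↔ regCond i k1 k2 := by
  simp only [OrthogonalNeZero, orthogonalCoords_long, orthogonalCoords_shortRep,
    Finset.mem_singleton, forall_eq]
  subst hk1 hk2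
  fin_cases i <;> simp [shortRep, eval_ofCoords, regCond] <;> grind

end Representatives

/-- The three linear maps `ξ_1, ξ_2, ξ_3` (determined by their values on the simple
roots) are generic linear residual points of `G2`, lie in pairwise distinct
`W0`-orbits, every generic linear residual point of `G2` is `W0`-conjugate to exactly
one of them, and their regular parameter sets `K^reg_{ξ_i}` are as listed. -/
theorem g2_generic_residual_classification
    (ξ : Fin 3 → ((ℝ × ℝ) →ₗ[ℝ] (Fin 2 → ℝ)))
    (hval : ∀ (i : Fin 3) (k : ℝ × ℝ) (j : Fin 2), eval (simple j) (ξ i k) = vals i k j) :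
    (∀ i, IsGenericResidual (ξ i)) ∧
    (∀ i j, i ≠ j → ¬ GenSameOrbit (ξ i) (ξ j)) ∧
    (∀ η : (ℝ × ℝ) →ₗ[ℝ] (Fin 2 → ℝ), IsGenericResidual η →
      ∃! i : Fin 3, GenSameOrbit (ξ i) η) ∧
    (∀ (i : Fin 3) (k1 k2 : ℝ), IsResidual k1 k2 (ξ i (k1, k2)) ↔ regCond i k1 k2) := by
  have hξ : ∀ i, HasValues (ofCoords (1, 0)) (ofCoords (shortRep i)) (ξ i) :=
    fun i => hasValues_of_eval_simple (hval i)
  have hlong : (1, 0) ∈ rootCoordsOfSqLength 3 := by decide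
  have hinj : ∀ {i j η}, GenSameOrbit (ξ i) η → GenSameOrbit (ξ j) η → i = j := fun hi hj =>
    eq_of_eval_self_eq (hval _) (hval _) fun k => by rw [← hi.eval_self_eq, ← hj.eval_self_eq]
  refine ⟨fun i => (hξ i).isGenericResidual hlong (shortRep_mem i),
    fun i j hij h => hij (hinj h ⟨id, inWeyl_id, fun _ => rfl⟩), fun η hη => ?_,
    fun i k1 k2 => ?_⟩
  · obtain ⟨m, hm, n, hn, hηmn⟩ := hη.exists_hasValues
    obtain ⟨i, f, hf, hfm, hfn⟩ := exists_inWeyl_ofCoords_eq hm hn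
    rw [← hfm, ← hfn] at hηmn
    have hi : GenSameOrbit (ξ i) η := (hξ i).genSameOrbit hf hηmn
    exact ⟨i, hi, fun j hj => hinj hj hi⟩
  · obtain ⟨hk1, hk2⟩ := hξ i (k1, k2)
    rw [isResidual_iff_orthogonalNeZero hlong (shortRep_mem i) hk1 hk2,
      orthogonalNeZero_iff_regCond hk1 hk2]

end G2Res

end
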